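/- Let d ≥ 2 be an integer, let C > 0, let 1 ≤ p ≤ q ≤ r < ∞ with 1 + (d−1)/r ≥ d/p, and let ε > 0, C_ε > 0, λ_0 ∈ (0,1]. Suppose that ℒ^d(E) ≥ C_ε λ^{p+ε} ℒ^{2(d−1)}(F)^{p/q} m(F)^{p(1/r − 1/q)} whenever E ⊆ Q is measurable, λ ≥ λ_0, and F ⊆ B(0,C) × ℝ^{d−1} is measurable with T[χ_E](ξ,x) ≥ λ for all (ξ,x) ∈ F. Then for every ρ ∈ (0,1), every axis-parallel sub-cube Q̃ ⊆ Q of side length ρ, every measurable Ẽ ⊆ Q̃, every λ̃ ≥ ρ λ_0, and every measurable F̃ ⊆ B(0,C) × ℝ^{d−1} with T[χ_{Ẽ}](ξ,x) ≥ λ̃ for all (ξ,x) ∈ F̃, one has ℒ^d(Ẽ) ≥ ρ^{−ε} C_ε λ̃^{p+ε} ℒ^{2(d−1)}(F̃)^{p/q} m(F̃)^{p(1/r − 1/q)}. -/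

import Mathlib

open MeasureTheory ENNReal

noncomputable section

/-- `ℝ^n` with the Euclidean structure. We model `ℝ^d` as `Euc (d-1) × ℝ`. -/
abbrev Euc (n : ℕ) := EuclideanSpace ℝ (Fin n)

/-- The local x-ray transform: `T[f](ξ,x) = ∫_0^1 f (x + t(ξ + e_d)) dt`. -/
def xrayT {n : ℕ} (f : Euc n × ℝ → ℝ≥0∞) (ξ x : Euc n) : ℝ≥0∞ :=
  ∫⁻ t in Set.Ioc (0:ℝ) 1, f (x + t • ξ, t)

/-- The closed unit cube `Q` centered at `(1/2) e_d` with side length `1`. -/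
def Qcube (n : ℕ) : Set (Euc n × ℝ) :=
  {z | (∀ i, z.1 i ∈ Set.Icc (-(1:ℝ)/2) (1/2)) ∧ z.2 ∈ Set.Icc (0:ℝ) 1}

/-- The closed axis-parallel cube with lower corner `(a, b)` and side length `ρ`. -/
def subCube (n : ℕ) (a : Euc n) (b ρ : ℝ) : Set (Euc n × ℝ) :=
  {z | (∀ i, z.1 i ∈ Set.Icc (a i) (a i + ρ)) ∧ z.2 ∈ Set.Icc b (b + ρ)}

/-- `m(F) = sup_ξ ℒ^{d-1}({x : (ξ,x) ∈ F})`. -/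
def mF {n : ℕ} (F : Set (Euc n × Euc n)) : ℝ≥0∞ :=
  ⨆ ξ : Euc n, volume {x : Euc n | (ξ, x) ∈ F}

/-!
The affine map `z ↦ z₀ + ρ z` carries the unit cube onto a sub-cube of side length `ρ`. Pulling `E'`
back multiplies its volume by `ρ ^ (-(n + 1))`, where `n = d - 1`. A line in direction `ξ` is pulled
back to a line in the *same* direction, so that `F'` changes only in its `x` variable: each slice,
and hence also `ℒ(F')` and `m(F')`, is multiplied by `ρ ^ (-n)`, and `F'` still lies over the same
directions. The x-ray transform is divided by `ρ`. The weak estimate for the pulled back sets then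
has an extra power of `ρ`, which the dimension condition bounds below by `ρ ^ (-ε)`.
-/

lemma mul_rpow_of_left_ne_zero_of_left_ne_top {x : ℝ≥0∞} (hx₀ : x ≠ 0) (hx : x ≠ ⊤) (y : ℝ≥0∞)
    (z : ℝ) : (x * y) ^ z = x ^ z * y ^ z := by
  simp only [ENNReal.mul_rpow_eq_ite, hx₀, hx, false_and, or_self, if_false]

lemma ofReal_rpow_mul_rpow {ρ : ℝ} (hρ : 0 < ρ) (y z : ℝ) (u : ℝ≥0∞) :
    (ENNReal.ofReal (ρ ^ y) * u) ^ z = ENNReal.ofReal (ρ ^ (y * z)) * u ^ z := by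
  have hpos : 0 < ρ ^ y := Real.rpow_pos_of_pos hρ y
  rw [mul_rpow_of_left_ne_zero_of_left_ne_top (ENNReal.ofReal_pos.2 hpos).ne' ofReal_ne_top,
    ENNReal.ofReal_rpow_of_pos hpos, Real.rpow_mul hρ.le]

lemma ofReal_rpow_add {ρ : ℝ} (hρ : 0 < ρ) (y z : ℝ) :
    ENNReal.ofReal (ρ ^ (y + z)) = ENNReal.ofReal (ρ ^ y) * ENNReal.ofReal (ρ ^ z) := by
  rw [Real.rpow_add hρ, ENNReal.ofReal_mul (by positivity)]

lemma mul_rpow_mul_rpow_mul_rpow_of_rescaled {ρ : ℝ} (hρ : 0 < ρ) (n s α β : ℝ)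
    (K L V M : ℝ≥0∞) :
    K * (ENNReal.ofReal (ρ ^ (-1 : ℝ)) * L) ^ s * (ENNReal.ofReal (ρ ^ (-n)) * V) ^ α *
        (ENNReal.ofReal (ρ ^ (-n)) * M) ^ β =
      ENNReal.ofReal (ρ ^ (-s - n * (α + β))) * (K * L ^ s * V ^ α * M ^ β) := by
  have hexp : -s - n * (α + β) = -1 * s + (-n * α + -n * β) := by ring
  rw [hexp, ofReal_rpow_add hρ, ofReal_rpow_add hρ]
  simp only [ofReal_rpow_mul_rpow hρ]
  generalize -n * α = u, -n * β = v
  ring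

lemma addHaar_setOf_add_smul_mem {V : Type*} [NormedAddCommGroup V] [NormedSpace ℝ V]
    [MeasurableSpace V] [BorelSpace V] [FiniteDimensional ℝ V] (μ : Measure V)
    [μ.IsAddHaarMeasure] (v : V) {ρ : ℝ} (hρ : 0 < ρ) (S : Set V) :
    μ {z | v + ρ • z ∈ S} = ENNReal.ofReal (ρ ^ (-(Module.finrank ℝ V : ℝ))) * μ S := by
  change μ ((ρ • ·) ⁻¹' ((v + ·) ⁻¹' S)) = _
  rw [Measure.addHaar_preimage_smul μ hρ.ne', measure_preimage_add, abs_of_pos (by positivity),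
    Real.rpow_neg hρ.le, Real.rpow_natCast]

section XrayTransform

variable {n : ℕ} {E : Set (Euc n × ℝ)}

lemma xrayT_indicator_one (hE : MeasurableSet E) (ξ x : Euc n) :
    xrayT (E.indicator fun _ => 1) ξ x = volume ({t : ℝ | (x + t • ξ, t) ∈ E} ∩ Set.Ioc 0 1) := by
  have hmeas : MeasurableSet {t : ℝ | (x + t • ξ, t) ∈ E} :=
    (by fun_prop : Measurable fun t : ℝ => (x + t • ξ, t)) hE
  calc xrayT (E.indicator fun _ => 1) ξ x
      = ∫⁻ t in Set.Ioc (0 : ℝ) 1, {t : ℝ | (x + t • ξ, t) ∈ E}.indicator 1 t := rfl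
    _ = volume ({t : ℝ | (x + t • ξ, t) ∈ E} ∩ Set.Ioc 0 1) := by
      rw [lintegral_indicator_one hmeas, Measure.restrict_apply hmeas]

lemma xrayT_indicator_one_le (hE : MeasurableSet E) (ξ x : Euc n) :
    xrayT (E.indicator fun _ => 1) ξ x ≤ volume {t : ℝ | (x + t • ξ, t) ∈ E} :=
  (xrayT_indicator_one hE ξ x).trans_le (measure_mono Set.inter_subset_left)

lemma xrayT_indicator_one_of_subset_slab (hE : MeasurableSet E)
    (hslab : ∀ z ∈ E, z.2 ∈ Set.Icc (0 : ℝ) 1) (ξ x : Euc n) :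
    xrayT (E.indicator fun _ => 1) ξ x = volume {t : ℝ | (x + t • ξ, t) ∈ E} := by
  have hsub : {t : ℝ | (x + t • ξ, t) ∈ E} ⊆ Set.Icc 0 1 := fun t ht => hslab _ ht
  rw [xrayT_indicator_one hE, measure_congr ((ae_eq_refl _).inter Ioc_ae_eq_Icc),
    Set.inter_eq_left.2 hsub]

end XrayTransform

/-- The dilation by the factor `ρ` of `ℝ^d = ℝ^n × ℝ` that sends the origin to `z₀`. -/
def pointRescaling {n : ℕ} (z₀ : Euc n × ℝ) (ρ : ℝ) (z : Euc n × ℝ) : Euc n × ℝ :=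
  z₀ + ρ • z

/-- The action of `pointRescaling z₀ ρ` on lines: `(ξ, x)` encodes the line `t ↦ (x + t ξ, t)`, and
its image is the line with the same direction `ξ` through the image of `(x, 0)`, which lies at
height `z₀.2`. -/
def lineRescaling {n : ℕ} (z₀ : Euc n × ℝ) (ρ : ℝ) (w : Euc n × Euc n) : Euc n × Euc n :=
  (w.1, z₀.1 - z₀.2 • w.1 + ρ • w.2)

section Rescaling

variable {n : ℕ} (z₀ : Euc n × ℝ) {ρ : ℝ}

lemma measurable_pointRescaling : Measurable (pointRescaling z₀ ρ) := by
  unfold pointRescaling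
  fun_prop

lemma measurable_lineRescaling : Measurable (lineRescaling z₀ ρ) := by
  unfold lineRescaling
  fun_prop

lemma pointRescaling_line (w : Euc n × Euc n) (t : ℝ) :
    pointRescaling z₀ ρ (w.2 + t • w.1, t) =
      ((lineRescaling z₀ ρ w).2 + (z₀.2 + ρ • t) • w.1, z₀.2 + ρ • t) := by
  refine Prod.ext ?_ rfl
  simp only [pointRescaling, lineRescaling, Prod.fst_add, Prod.smul_fst, smul_eq_mul]
  module

lemma pointRescaling_preimage_subCube (hρ : 0 < ρ) (a : Euc n) (b : ℝ) :
    pointRescaling (a + ρ • WithLp.toLp 2 fun _ => (1 / 2 : ℝ), b) ρ ⁻¹' subCube n a b ρ =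
      Qcube n := by
  have hfst (u v : ℝ) :
      u + ρ * (1 / 2) + ρ * v ∈ Set.Icc u (u + ρ) ↔ v ∈ Set.Icc (-(1 : ℝ) / 2) (1 / 2) := by
    constructor <;> rintro ⟨h₁, h₂⟩ <;> constructor <;> nlinarith
  have hsnd (t : ℝ) : b + ρ * t ∈ Set.Icc b (b + ρ) ↔ t ∈ Set.Icc (0 : ℝ) 1 := by
    constructor <;> rintro ⟨h₁, h₂⟩ <;> constructor <;> nlinarith
  ext z
  exact and_congr (forall_congr' fun i => hfst (a i) (z.1 i)) (hsnd z.2)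

lemma volume_pointRescaling_preimage (hρ : 0 < ρ) (E : Set (Euc n × ℝ)) :
    volume (pointRescaling z₀ ρ ⁻¹' E) = ENNReal.ofReal (ρ ^ (-(n + 1 : ℝ))) * volume E := by
  have := addHaar_setOf_add_smul_mem
    ((volume : Measure (Euc n)).prod (volume : Measure ℝ)) z₀ hρ E
  rwa [Module.finrank_prod, finrank_euclideanSpace_fin, Module.finrank_self, Nat.cast_add,
    Nat.cast_one] at this

lemma volume_slice_lineRescaling_preimage (hρ : 0 < ρ) (F : Set (Euc n × Euc n)) (ξ : Euc n) :
    volume {x | (ξ, x) ∈ lineRescaling z₀ ρ ⁻¹' F} =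
      ENNReal.ofReal (ρ ^ (-(n : ℝ))) * volume {x | (ξ, x) ∈ F} := by
  have := addHaar_setOf_add_smul_mem volume (z₀.1 - z₀.2 • ξ) hρ {x | (ξ, x) ∈ F}
  rwa [finrank_euclideanSpace_fin] at this

lemma mF_lineRescaling_preimage (hρ : 0 < ρ) (F : Set (Euc n × Euc n)) :
    mF (lineRescaling z₀ ρ ⁻¹' F) = ENNReal.ofReal (ρ ^ (-(n : ℝ))) * mF F := by
  simp only [mF, volume_slice_lineRescaling_preimage z₀ hρ, ENNReal.mul_iSup]

lemma volume_lineRescaling_preimage (hρ : 0 < ρ) {F : Set (Euc n × Euc n)}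
    (hF : MeasurableSet F) :
    volume (lineRescaling z₀ ρ ⁻¹' F) = ENNReal.ofReal (ρ ^ (-(n : ℝ))) * volume F := by
  rw [Measure.volume_eq_prod, Measure.prod_apply (measurable_lineRescaling z₀ hF),
    Measure.prod_apply hF, ← lintegral_const_mul _ (measurable_measure_prodMk_left hF)]
  exact lintegral_congr (volume_slice_lineRescaling_preimage z₀ hρ F)

lemma volume_line_pointRescaling_preimage (hρ : 0 < ρ) (E : Set (Euc n × ℝ))
    (w : Euc n × Euc n) :
    volume {t : ℝ | (w.2 + t • w.1, t) ∈ pointRescaling z₀ ρ ⁻¹' E} =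
      ENNReal.ofReal (ρ ^ (-1 : ℝ)) *
        volume {t : ℝ | ((lineRescaling z₀ ρ w).2 + t • w.1, t) ∈ E} := by
  have := addHaar_setOf_add_smul_mem volume z₀.2 hρ
    {t : ℝ | ((lineRescaling z₀ ρ w).2 + t • w.1, t) ∈ E}
  rw [Module.finrank_self, Nat.cast_one] at this
  simpa only [Set.mem_preimage, Set.mem_ofPred_eq, pointRescaling_line] using this

lemma ofReal_rpow_neg_one_mul_xrayT_le (hρ : 0 < ρ) {E : Set (Euc n × ℝ)} (hE : MeasurableSet E)
    (hslab : ∀ z ∈ pointRescaling z₀ ρ ⁻¹' E, z.2 ∈ Set.Icc (0 : ℝ) 1) (w : Euc n × Euc n) :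
    ENNReal.ofReal (ρ ^ (-1 : ℝ)) *
        xrayT (E.indicator fun _ => 1) (lineRescaling z₀ ρ w).1 (lineRescaling z₀ ρ w).2 ≤
      xrayT ((pointRescaling z₀ ρ ⁻¹' E).indicator fun _ => 1) w.1 w.2 := by
  rw [xrayT_indicator_one_of_subset_slab (measurable_pointRescaling z₀ hE) hslab,
    volume_line_pointRescaling_preimage z₀ hρ]
  gcongr
  exact xrayT_indicator_one_le hE _ _

end Rescaling

/-- The weak-type x-ray estimate with constant `K`, threshold `lam₀` and exponents `s`, `α`, `β`,
for sets `E ⊆ P` and for lines with direction in `D`. The theorem concerns `s = p + ε`, `α = p / q`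
and `β = p (1 / r - 1 / q)`. -/
def XrayEstimate {n : ℕ} (D : Set (Euc n)) (P : Set (Euc n × ℝ)) (K : ℝ≥0∞)
    (lam₀ s α β : ℝ) : Prop :=
  ∀ E ⊆ P, MeasurableSet E → ∀ lam : ℝ, lam₀ ≤ lam →
    ∀ F : Set (Euc n × Euc n), F ⊆ D ×ˢ (Set.univ : Set (Euc n)) → MeasurableSet F →
      (∀ w ∈ F, ENNReal.ofReal lam ≤ xrayT (E.indicator fun _ => (1 : ℝ≥0∞)) w.1 w.2) →
      K * ENNReal.ofReal lam ^ s * volume F ^ α * mF F ^ β ≤ volume E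

namespace XrayEstimate

variable {n : ℕ} {D : Set (Euc n)} {P P' : Set (Euc n × ℝ)} {K K' : ℝ≥0∞} {lam₀ s α β ρ : ℝ}

lemma mono_const (h : XrayEstimate D P K lam₀ s α β) (hK : K' ≤ K) :
    XrayEstimate D P K' lam₀ s α β := by
  intro E hEP hE lam hlam F hFD hF hT
  grw [hK]
  exact h E hEP hE lam hlam F hFD hF hT

lemma of_pointRescaling_preimage (h : XrayEstimate D P K lam₀ s α β)
    (hslab : ∀ z ∈ P, z.2 ∈ Set.Icc (0 : ℝ) 1) (hρ : 0 < ρ) {z₀ : Euc n × ℝ}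
    (hP' : pointRescaling z₀ ρ ⁻¹' P' ⊆ P) :
    XrayEstimate D P' (ENNReal.ofReal (ρ ^ (n + 1 - s - n * (α + β))) * K) (ρ * lam₀) s α β := by
  intro E hEP hE lam hlam F hFD hF hT
  have hEP' : pointRescaling z₀ ρ ⁻¹' E ⊆ P := (Set.preimage_mono hEP).trans hP'
  have hofReal :
      ENNReal.ofReal (ρ⁻¹ * lam) = ENNReal.ofReal (ρ ^ (-1 : ℝ)) * ENNReal.ofReal lam := by
    rw [ENNReal.ofReal_mul (by positivity), Real.rpow_neg_one]
  have key := h _ hEP' (measurable_pointRescaling z₀ hE) (ρ⁻¹ * lam)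
    ((le_inv_mul_iff₀ hρ).2 hlam) (lineRescaling z₀ ρ ⁻¹' F)
    (fun w hw => ⟨(hFD hw).1, trivial⟩) (measurable_lineRescaling z₀ hF) fun w hw => by
      grw [hofReal, hT _ hw]
      exact ofReal_rpow_neg_one_mul_xrayT_le z₀ hρ hE (fun z hz => hslab z (hEP' hz)) w
  rw [volume_pointRescaling_preimage z₀ hρ, volume_lineRescaling_preimage z₀ hρ hF,
    mF_lineRescaling_preimage z₀ hρ, hofReal, mul_rpow_mul_rpow_mul_rpow_of_rescaled hρ] at key
  calc ENNReal.ofReal (ρ ^ (n + 1 - s - n * (α + β))) * K * ENNReal.ofReal lam ^ s *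
        volume F ^ α * mF F ^ β
      = ENNReal.ofReal (ρ ^ (n + 1 : ℝ)) * (ENNReal.ofReal (ρ ^ (-s - n * (α + β))) *
          (K * ENNReal.ofReal lam ^ s * volume F ^ α * mF F ^ β)) := by
        rw [← mul_assoc, ← ofReal_rpow_add hρ, ← add_sub_assoc, ← sub_eq_add_neg]
        simp only [mul_assoc]
    _ ≤ ENNReal.ofReal (ρ ^ (n + 1 : ℝ)) *
          (ENNReal.ofReal (ρ ^ (-(n + 1 : ℝ))) * volume E) := by gcongr
    _ = volume E := by
        rw [← mul_assoc, ← ofReal_rpow_add hρ, add_neg_cancel, Real.rpow_zero, ofReal_one, one_mul]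

lemma to_subCube (h : XrayEstimate D (Qcube n) K lam₀ s α β) (hρ : 0 < ρ) (a : Euc n) (b : ℝ) :
    XrayEstimate D (subCube n a b ρ) (ENNReal.ofReal (ρ ^ (n + 1 - s - n * (α + β))) * K)
      (ρ * lam₀) s α β :=
  h.of_pointRescaling_preimage (fun _ hz => hz.2) hρ (pointRescaling_preimage_subCube hρ a b).subset

end XrayEstimate

lemma add_le_add_mul_of_div_le {n p q r : ℝ} (hp : 0 < p) (hdim : (n + 1) / p ≤ 1 + n / r) (ε : ℝ) :
    n + 1 + ε ≤ p + ε + n * (p / q + p * (1 / r - 1 / q)) := by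
  have hmul : n + 1 ≤ (1 + n / r) * p := (div_le_iff₀ hp).1 hdim
  have hexp : n * (p / q + p * (1 / r - 1 / q)) = n / r * p := by ring
  linarith

theorem statement10_general {n : ℕ} {D : Set (Euc n)} {K : ℝ≥0∞} {lam₀ s α β ε ρ : ℝ}
    (h : XrayEstimate D (Qcube n) K lam₀ s α β) (hdim : n + 1 + ε ≤ s + n * (α + β))
    (hρ : ρ ∈ Set.Ioo (0 : ℝ) 1) (a : Euc n) (b : ℝ) :
    XrayEstimate D (subCube n a b ρ) (ENNReal.ofReal (ρ ^ (-ε)) * K) (ρ * lam₀) s α β := by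
  have hgain : ρ ^ (-ε) ≤ ρ ^ (n + 1 - s - n * (α + β)) :=
    Real.rpow_le_rpow_of_exponent_ge hρ.1 hρ.2.le (by linarith)
  refine (h.to_subCube hρ.1 a b).mono_const ?_
  gcongr

/-- Induction on scales (Claim 2): the weak estimate on the unit cube `Q` implies
a gain of `ρ^{-ε}` for sets contained in sub-cubes of side length `ρ`. -/
theorem statement10 (d : ℕ) (hd : 2 ≤ d) (C : ℝ) (hC : 0 < C) (p q r : ℝ)
    (hp : 1 ≤ p) (hpq : p ≤ q) (hqr : q ≤ r) (hdim : 1 + ((d:ℝ) - 1) / r ≥ (d:ℝ) / p)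
    (ε Cε lam₀ : ℝ) (hε : 0 < ε) (hCε : 0 < Cε) (hlam₀ : lam₀ ∈ Set.Ioc (0:ℝ) 1)
    (hweak : ∀ E : Set (Euc (d - 1) × ℝ), E ⊆ Qcube (d - 1) → MeasurableSet E →
      ∀ lam : ℝ, lam₀ ≤ lam →
      ∀ F : Set (Euc (d - 1) × Euc (d - 1)),
        F ⊆ (Metric.ball (0 : Euc (d - 1)) C) ×ˢ (Set.univ : Set (Euc (d - 1))) →
        MeasurableSet F →
        (∀ w ∈ F, ENNReal.ofReal lam ≤ xrayT (E.indicator fun _ => (1:ℝ≥0∞)) w.1 w.2) →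
        ENNReal.ofReal Cε * ENNReal.ofReal lam ^ (p + ε) * (volume F) ^ (p / q) *
            (mF F) ^ (p * (1/r - 1/q))
          ≤ volume E) :
    ∀ ρ : ℝ, ρ ∈ Set.Ioo (0:ℝ) 1 → ∀ (a : Euc (d - 1)) (b : ℝ),
      subCube (d - 1) a b ρ ⊆ Qcube (d - 1) →
      ∀ E' : Set (Euc (d - 1) × ℝ), E' ⊆ subCube (d - 1) a b ρ → MeasurableSet E' →
      ∀ lam' : ℝ, ρ * lam₀ ≤ lam' →
      ∀ F' : Set (Euc (d - 1) × Euc (d - 1)),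
        F' ⊆ (Metric.ball (0 : Euc (d - 1)) C) ×ˢ (Set.univ : Set (Euc (d - 1))) →
        MeasurableSet F' →
        (∀ w ∈ F', ENNReal.ofReal lam' ≤ xrayT (E'.indicator fun _ => (1:ℝ≥0∞)) w.1 w.2) →
        ENNReal.ofReal (ρ ^ (-ε) * Cε) * ENNReal.ofReal lam' ^ (p + ε) *
            (volume F') ^ (p / q) * (mF F') ^ (p * (1/r - 1/q))
          ≤ volume E' := by
  obtain ⟨n, rfl⟩ : ∃ n, d = n + 1 := ⟨d - 1, by omega⟩
  rw [Nat.cast_add_one, add_sub_cancel_right] at hdim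
  intro ρ hρ a b _
  rw [ENNReal.ofReal_mul (Real.rpow_nonneg hρ.1.le _)]
  exact statement10_general hweak (add_le_add_mul_of_div_le (by linarith) hdim ε) hρ a b

end
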